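/- Let T be a tree with exactly three pendant vertices u1, u2, u3 and a major vertex m such that d(u1,m) ≡ 0 mod 3, d(u2,m) ≡ 2 mod 3, and d(u3,m) ≡ 0 mod 3. Then 1 is an eigenvalue of the Laplacian matrix L(T). -/

import Mathlib

/-!
The tree is a spider: `m` has degree three, the pendant vertices have degree one, and by the
degree sum formula every other vertex has degree two (`degree_spider`).

For a neighbour `n` of the root `m`, the branch of `T` at `m` through `n` consists of the vertices
`v` with `dist n v + 1 = dist m v`. A deepest vertex of a branch is pendant
(`exists_pendant_branch`), so the three pendant vertices lie in three different branches.

Along a branch the equation `L x = x` reads `x (k + 1) = x k - x (k - 1)`, where `k` is the distance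
to `m`, and the equation at the pendant end requires the value next to it to vanish. The solution
`1, 0, -1, -1, 0, 1, …` satisfies this on the branch of `u₂` (length `≡ 2 mod 3`) and the solution
`1, 1, 0, -1, -1, 0, …` on the branches of `u₁` and `u₃` (length `≡ 0 mod 3`). At `m` the equation
is `3 - (0 + 1 + 1) = 1`, so these values form an eigenvector.
-/

open SimpleGraph Matrix

variable {V : Type*}

/-- A pendant vertex: a vertex of degree one. -/
def IsPendant (G : SimpleGraph V) (v : V) : Prop := (G.neighborSet v).ncard = 1

/-- A major vertex: a vertex of degree at least three. -/
def IsMajor (G : SimpleGraph V) (v : V) : Prop := 3 ≤ (G.neighborSet v).ncard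

/-- `v` lies on the (unique, in a tree) path between `u` and `w`. -/
def OnPath (G : SimpleGraph V) (u w v : V) : Prop :=
  G.dist u v + G.dist v w = G.dist u w

/-- The number of pendant vertices of a graph. -/
noncomputable def numPendant (G : SimpleGraph V) : ℕ :=
  Nat.card {v : V // IsPendant G v}

/-- The Laplacian matrix `D - A` over `ℝ`. -/
noncomputable def lapMat [Fintype V] (G : SimpleGraph V) : Matrix V V ℝ :=
  letI := Classical.decEq V
  letI : DecidableRel G.Adj := Classical.decRel _
  G.lapMatrix ℝ

/-- The signless Laplacian matrix `D + A` over `ℝ`. -/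
noncomputable def signlessLapMat [Fintype V] (G : SimpleGraph V) : Matrix V V ℝ :=
  letI := Classical.decEq V
  letI : DecidableRel G.Adj := Classical.decRel _
  G.degMatrix ℝ + G.adjMatrix ℝ

/-- The multiplicity of `μ` as an eigenvalue of the Laplacian matrix of `G`. -/
noncomputable def lapMult [Finite V] (G : SimpleGraph V) (μ : ℝ) : ℕ :=
  letI := Fintype.ofFinite V
  letI := Classical.decEq V
  Module.finrank ℝ (Module.End.eigenspace (Matrix.toLin' (lapMat G)) μ)

/-- `μ` is an eigenvalue of the Laplacian matrix of `G`. -/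
def HasLapEigen [Finite V] (G : SimpleGraph V) (μ : ℝ) : Prop :=
  letI := Fintype.ofFinite V
  ∃ x : V → ℝ, x ≠ 0 ∧ lapMat G *ᵥ x = μ • x

/-- Membership in the class `𝒬`: a tree in which any two distinct pendant vertices are
at distance `≡ 2 (mod 3)`. -/
def InQ [Finite V] (G : SimpleGraph V) : Prop :=
  G.IsTree ∧ ∀ u v : V, IsPendant G u → IsPendant G v → u ≠ v → G.dist u v % 3 = 2

/-- A node of a tree: a vertex at distance `≡ 1 (mod 3)` from every pendant vertex. -/
def IsNode (G : SimpleGraph V) (η : V) : Prop :=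
  ∀ u : V, IsPendant G u → G.dist η u % 3 = 1

/-- Membership in the class `𝒫`: a path on `n` vertices with `n ≡ 2 (mod 3)`. -/
def InP [Finite V] (G : SimpleGraph V) : Prop :=
  G.IsTree ∧ (∀ v : V, (G.neighborSet v).ncard ≤ 2) ∧ Nat.card V % 3 = 2

/-- The induced subgraph on `S` is a tree of class `𝒬` and `b ∈ S` is a node of it. -/
def NodeAttach [Finite V] (T : SimpleGraph V) (S : Set V) (b : V) : Prop :=
  ∃ hb : b ∈ S, InQ (T.induce S) ∧ IsNode (T.induce S) ⟨b, hb⟩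

/-- The induced subgraph on `S` is a path of class `𝒫` and `b ∈ S` is a pendant vertex
of it. -/
def PendantAttach [Finite V] (T : SimpleGraph V) (S : Set V) (b : V) : Prop :=
  ∃ hb : b ∈ S, InP (T.induce S) ∧ IsPendant (T.induce S) ⟨b, hb⟩

/-- The tree `T` is obtained from a tree `H` consisting of three internally disjoint
paths `P_{u j, m}` (`j = 0,1,2`) joined at `m`, whose three leg lengths satisfy `cond`,
together with trees `T i` (`i : Fin k`) of class `𝒬 ∪ 𝒫` (realized as the induced
subgraphs on the sets `S i`), by identifying for each `i` a vertex `a i` of `H`, lying on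
some `P_{u j, m}` with `d(a i, u j) ≡ 1 (mod 3)`, with a vertex `b i` of `T i` which is a
node of `T i` if `T i ∈ 𝒬` and a pendant vertex of `T i` if `T i ∈ 𝒫`. -/
def InGammaWith [Finite V] (T : SimpleGraph V) (cond : ℕ → ℕ → ℕ → Prop) : Prop :=
  ∃ (m : V) (u : Fin 3 → V) (k : ℕ) (a : Fin k → V) (S : Fin k → Set V),
    T.IsTree ∧
    Function.Injective u ∧
    (∀ j, u j ≠ m) ∧
    (∀ j j', j ≠ j' → ∀ v, OnPath T (u j) m v → OnPath T (u j') m v → v = m) ∧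
    cond (T.dist (u 0) m) (T.dist (u 1) m) (T.dist (u 2) m) ∧
    (∀ i, ∃ j, OnPath T (u j) m (a i) ∧ T.dist (a i) (u j) % 3 = 1) ∧
    (∀ i, S i ∩ {v | ∃ j, OnPath T (u j) m v} = {a i}) ∧
    (∀ i i', i ≠ i' → ∀ v ∈ S i ∩ S i', v = a i ∧ v = a i') ∧
    (∀ v, (∃ j, OnPath T (u j) m v) ∨ ∃ i, v ∈ S i) ∧
    (∀ v w, T.Adj v w →
      ((∃ j, OnPath T (u j) m v) ∧ (∃ j, OnPath T (u j) m w)) ∨ ∃ i, v ∈ S i ∧ w ∈ S i) ∧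
    (∀ i, NodeAttach T (S i) (a i) ∨ PendantAttach T (S i) (a i))

/-- The class `Γ_A`: base tree in `Ω_A`. -/
def InGammaA [Finite V] (T : SimpleGraph V) : Prop :=
  InGammaWith T (fun d₁ d₂ d₃ => d₁ % 3 = 1 ∧ d₂ % 3 = 1 ∧ d₃ % 3 ≠ 1)

/-- The class `Γ_B`: base tree in `Ω_B`. -/
def InGammaB [Finite V] (T : SimpleGraph V) : Prop :=
  InGammaWith T (fun d₁ d₂ d₃ => d₁ % 3 = 2 ∧ d₂ % 3 = 0 ∧ d₃ % 3 = 0)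

/-- The class `Γ = Γ_A ∪ Γ_B`. -/
def InGamma [Finite V] (T : SimpleGraph V) : Prop := InGammaA T ∨ InGammaB T

/-- The solution of `x (k + 2) = x (k + 1) - x k` with `x 0 = 1` and `x 1 = c`. -/
def legSeq (c : ℝ) : ℕ → ℝ
  | 0 => 1
  | 1 => c
  | k + 2 => legSeq c (k + 1) - legSeq c k

lemma legSeq_add_three (c : ℝ) (k : ℕ) : legSeq c (k + 3) = -legSeq c k := by
  simp [legSeq]

lemma legSeq_add_mul (c : ℝ) (i : ℕ) (h : legSeq c i = 0) (j : ℕ) :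
    legSeq c (3 * j + i) = 0 := by
  induction j with
  | zero => simpa using h
  | succ j ih =>
    rw [show 3 * (j + 1) + i = 3 * j + i + 3 by ring, legSeq_add_three, ih, neg_zero]

lemma legSeq_one_eq_zero {k : ℕ} (h : k % 3 = 2) : legSeq 1 k = 0 := by
  rw [show k = 3 * (k / 3) + 2 by omega]
  exact legSeq_add_mul 1 2 (by simp [legSeq]) _

lemma legSeq_zero_eq_zero {k : ℕ} (h : k % 3 = 1) : legSeq 0 k = 0 := by
  rw [show k = 3 * (k / 3) + 1 by omega]
  exact legSeq_add_mul 0 1 (by simp [legSeq]) _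

lemma exists_parent {T : SimpleGraph V} (hT : T.IsTree) {r v : V} (h : r ≠ v) :
    ∃ w, T.Adj v w ∧ T.dist r w + 1 = T.dist r v := by
  obtain ⟨p, hp⟩ := hT.connected.exists_walk_length_eq_dist v r
  cases p with
  | nil => exact absurd rfl h
  | @cons _ w _ hvw q =>
    refine ⟨w, hvw, ?_⟩
    have h1 := dist_le q
    rw [Walk.length_cons] at hp
    have h2 := hT.dist_eq_dist_add_one_of_adj r hvw
    rw [dist_comm (u := r) (v := w), dist_comm (u := r) (v := v)] at *
    omega

lemma parent_unique {T : SimpleGraph V} (hT : T.IsTree) {r v w w' : V}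
    (h : T.Adj v w) (h' : T.Adj v w') (hd : T.dist r w + 1 = T.dist r v)
    (hd' : T.dist r w' + 1 = T.dist r v) : w = w' := by
  obtain ⟨p, hp⟩ := hT.connected.exists_walk_length_eq_dist w r
  obtain ⟨p', hp'⟩ := hT.connected.exists_walk_length_eq_dist w' r
  have hc : (Walk.cons h p).IsPath := Walk.isPath_of_length_eq_dist _ (by
    rw [Walk.length_cons, hp, dist_comm, hd, dist_comm])
  have hc' : (Walk.cons h' p').IsPath := Walk.isPath_of_length_eq_dist _ (by
    rw [Walk.length_cons, hp', dist_comm, hd', dist_comm])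
  have := (hT.existsUnique_path v r).unique hc hc'
  injection this

/-- A child of a vertex lies in the same branch at `m` as the vertex itself. -/
lemma branch_child {T : SimpleGraph V} (hT : T.IsTree) {m n v w : V} (hn : T.Adj m n)
    (hvw : T.Adj v w) (hd : T.dist m w = T.dist m v + 1)
    (hv : T.dist n v + 1 = T.dist m v) : T.dist n w + 1 = T.dist m w := by
  have h1 : T.dist n w ≤ T.dist n v + T.dist v w := hT.connected.dist_triangle
  have h2 : T.dist m w ≤ T.dist m n + T.dist n w := hT.connected.dist_triangle
  rw [dist_eq_one_iff_adj.2 hvw] at h1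
  rw [dist_eq_one_iff_adj.2 hn] at h2
  omega

lemma exists_branch {T : SimpleGraph V} (hT : T.IsTree) {m v : V} (h : v ≠ m) :
    ∃ n, T.Adj m n ∧ T.dist n v + 1 = T.dist m v := by
  obtain ⟨n, hn, hd⟩ := exists_parent hT h
  exact ⟨n, hn, by rwa [dist_comm, dist_comm (u := m)]⟩

lemma branch_unique {T : SimpleGraph V} (hT : T.IsTree) {m n nb v : V}
    (hn : T.Adj m n) (hnb : T.Adj m nb) (h : T.dist n v + 1 = T.dist m v)
    (hb : T.dist nb v + 1 = T.dist m v) : n = nb := by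
  rw [dist_comm, dist_comm (u := m)] at h hb
  exact parent_unique hT hn hnb h hb

/-- Apart from `m` itself, the parent of a vertex lies in the same branches at `m`. -/
lemma branch_iff {T : SimpleGraph V} (hT : T.IsTree) {m n v w : V} (hn : T.Adj m n)
    (hvw : T.Adj v w) (hd : T.dist m w = T.dist m v + 1) (hv : v ≠ m) :
    T.dist n w + 1 = T.dist m w ↔ T.dist n v + 1 = T.dist m v := by
  refine ⟨fun h => ?_, branch_child hT hn hvw hd⟩
  obtain ⟨nb, hnb, hb⟩ := exists_branch hT hv
  rwa [branch_unique hT hn hnb h (branch_child hT hnb hvw hd hb)]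

/-- Every branch at `m` contains a pendant vertex: its deepest one. -/
lemma exists_pendant_branch [Finite V] {T : SimpleGraph V} (hT : T.IsTree) {m n : V}
    (hn : T.Adj m n) : ∃ u, IsPendant T u ∧ T.dist n u + 1 = T.dist m u := by
  obtain ⟨v, hv, hmax⟩ := Set.exists_max_image {v | T.dist n v + 1 = T.dist m v} (T.dist m)
    (Set.toFinite _) ⟨n, by simp [dist_eq_one_iff_adj.2 hn]⟩
  refine ⟨v, ?_, hv⟩
  have hvm : m ≠ v := by
    rintro rfl
    simp at hv
  obtain ⟨p, hp, hpd⟩ := exists_parent hT hvm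
  refine Set.ncard_eq_one.2 ⟨p, Set.eq_singleton_iff_unique_mem.2 ⟨hp, fun w hw => ?_⟩⟩
  rcases hT.dist_eq_dist_add_one_of_adj m hw with h | h
  · exact parent_unique hT hw hp h.symm hpd
  · have := hmax w (branch_child hT hn hw h hv)
    omega

lemma ncard_neighborSet [Fintype V] (T : SimpleGraph V) [DecidableRel T.Adj] (v : V) :
    (T.neighborSet v).ncard = T.degree v := by
  rw [Set.ncard_eq_toFinset_card']
  rfl

/-- The degree sequence of a tree with exactly three pendant vertices and a major vertex `m`. -/
lemma degree_spider [Fintype V] [DecidableEq V] (T : SimpleGraph V) [DecidableRel T.Adj]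
    (hT : T.IsTree) {u₁ u₂ u₃ m : V} (h12 : u₁ ≠ u₂) (h13 : u₁ ≠ u₃) (h23 : u₂ ≠ u₃)
    (h₁ : IsPendant T u₁) (h₂ : IsPendant T u₂) (h₃ : IsPendant T u₃)
    (hpend : ∀ w : V, IsPendant T w → w = u₁ ∨ w = u₂ ∨ w = u₃) (hm : IsMajor T m) (v : V) :
    (T.degree v : ℤ) = 2 + (if v = m then 1 else 0) - (if v = u₁ then 1 else 0)
      - (if v = u₂ then 1 else 0) - (if v = u₃ then 1 else 0) := by
  have hnt : Nontrivial V := ⟨u₁, u₂, h12⟩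
  simp only [IsPendant, IsMajor, ncard_neighborSet] at *
  have hle : ∀ v ∈ Finset.univ, (2 + (if v = m then 1 else 0) - (if v = u₁ then 1 else 0)
      - (if v = u₂ then 1 else 0) - (if v = u₃ then 1 else 0) : ℤ) ≤ T.degree v := by
    intro v _
    have h0 : 0 < T.degree v := hT.connected.preconnected.degree_pos_of_nontrivial v
    have hp := hpend v
    by_cases hv : T.degree v = 1
    · grind
    · grind
  have hsum : (∑ v, (T.degree v : ℤ)) = 2 * Fintype.card V - 2 := by
    have e1 := T.sum_degrees_eq_twice_card_edges
    have e2 := hT.card_edgeFinset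
    zify at e1 e2
    linarith
  refine ((Finset.sum_eq_sum_iff_of_le hle).1 ?_ v (Finset.mem_univ v)).symm
  rw [hsum]
  simp [Finset.sum_add_distrib, Finset.sum_sub_distrib]
  ring

/-- Let `T` be a tree with exactly three pendant vertices
`u₁, u₂, u₃` and a major vertex `m` such that `d(u₁,m) ≡ 0`, `d(u₂,m) ≡ 2` and
`d(u₃,m) ≡ 0 (mod 3)`. Then `1` is an eigenvalue of the Laplacian matrix `L(T)`. -/
theorem stmt_10 {V : Type*} [Finite V] (T : SimpleGraph V) (hT : T.IsTree)
    (u₁ u₂ u₃ m : V) (hdist : List.Pairwise (· ≠ ·) [u₁, u₂, u₃])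
    (h₁ : IsPendant T u₁) (h₂ : IsPendant T u₂) (h₃ : IsPendant T u₃)
    (hpend : ∀ w : V, IsPendant T w → w ∈ ({u₁, u₂, u₃} : Set V))
    (hm : IsMajor T m)
    (hd₁ : T.dist u₁ m % 3 = 0) (hd₂ : T.dist u₂ m % 3 = 2)
    (hd₃ : T.dist u₃ m % 3 = 0) :
    HasLapEigen T 1 := by
  classical
  let _ : Fintype V := Fintype.ofFinite V
  obtain ⟨⟨h12, h13⟩, h23⟩ : (u₁ ≠ u₂ ∧ u₁ ≠ u₃) ∧ u₂ ≠ u₃ := by simpa using hdist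
  replace hpend : ∀ w : V, IsPendant T w → w = u₁ ∨ w = u₂ ∨ w = u₃ := by simpa using hpend
  have hdeg := degree_spider T hT h12 h13 h23 h₁ h₂ h₃ hpend hm
  have hne : ∀ u, IsPendant T u → u ≠ m := by
    rintro u hu rfl
    simp only [IsPendant, IsMajor] at hu hm
    omega
  have hm1 := hne u₁ h₁
  have hm2 := hne u₂ h₂
  have hm3 := hne u₃ h₃
  obtain ⟨n₁, hn₁, hb₁⟩ := exists_branch hT hm1
  obtain ⟨n₂, hn₂, hb₂⟩ := exists_branch hT hm2
  obtain ⟨n₃, hn₃, hb₃⟩ := exists_branch hT hm3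
  -- The branches of the pendant vertices exhaust the neighbours of `m`, so they are distinct.
  have hN : T.neighborFinset m = {n₁, n₂, n₃} := by
    ext n
    simp only [mem_neighborFinset, Finset.mem_insert, Finset.mem_singleton]
    refine ⟨fun hn => ?_, by rintro (rfl | rfl | rfl) <;> assumption⟩
    obtain ⟨u, hu, hnu⟩ := exists_pendant_branch hT hn
    rcases hpend u hu with rfl | rfl | rfl
    · exact Or.inl (branch_unique hT hn hn₁ hnu hb₁)
    · exact Or.inr (Or.inl (branch_unique hT hn hn₂ hnu hb₂))
    · exact Or.inr (Or.inr (branch_unique hT hn hn₃ hnu hb₃))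
  have hdm : T.degree m = 3 := by
    have := hdeg m
    simp only [if_true, hm1.symm, hm2.symm, hm3.symm, if_false] at this
    omega
  have hcard : ({n₁, n₂, n₃} : Finset V).card = 3 := by
    rw [← hN]
    exact hdm
  obtain ⟨k12, k13, k23⟩ : n₁ ≠ n₂ ∧ n₁ ≠ n₃ ∧ n₂ ≠ n₃ := by
    refine ⟨?_, ?_, ?_⟩ <;> rintro rfl
    · have := Finset.card_le_two (a := n₁) (b := n₃)
      simp at hcard
      omega
    · have := Finset.card_le_two (a := n₂) (b := n₁)
      simp at hcard
      omega
    · have := Finset.card_le_two (a := n₁) (b := n₂)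
      simp at hcard
      omega
  -- `c v` is the parameter of the recurrence solution used on the branch containing `v`.
  let c : V → ℝ := fun v => if T.dist n₂ v + 1 = T.dist m v then 0 else 1
  let x : V → ℝ := fun v => legSeq (c v) (T.dist m v)
  have hxm : x m = 1 := by simp [x, legSeq]
  have hchild : ∀ v w, T.Adj v w → T.dist m w = T.dist m v + 1 → v ≠ m →
      x w = legSeq (c v) (T.dist m v + 1) := by
    intro v w hvw hd hv
    have : c w = c v := by simp only [c, branch_iff hT hn₂ hvw hd hv]
    simp only [x, this, hd]
  have hparent : ∀ v w, T.Adj v w → T.dist m w + 1 = T.dist m v →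
      x w = legSeq (c v) (T.dist m v - 1) := by
    intro v w hvw hd
    rw [← hd, Nat.add_sub_cancel]
    by_cases hw : w = m
    · subst hw
      simp [x, legSeq]
    · have : c v = c w := by simp only [c, branch_iff hT hn₂ hvw.symm hd.symm hw]
      simp only [x, this]
  have hpar : ∀ v, IsPendant T v → legSeq (c v) (T.dist m v - 1) = 0 →
      T.degree v * x v - ∑ w ∈ T.neighborFinset v, x w = x v := by
    intro v hv h0
    obtain ⟨p, hp, hpd⟩ := exists_parent hT (hne v hv).symm
    have hd : T.degree v = 1 := by rw [← ncard_neighborSet]; exact hv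
    obtain ⟨q, hq⟩ := Finset.card_eq_one.1 hd
    have hpq : p ∈ T.neighborFinset v := by simpa using hp
    rw [hq, Finset.mem_singleton] at hpq
    rw [hq, Finset.sum_singleton, ← hpq, hparent v p hp hpd, h0, hd]
    simp
  refine ⟨x, fun h => ?_, ?_⟩
  · rw [h] at hxm
    simp at hxm
  funext v
  have key : T.degree v * x v - ∑ w ∈ T.neighborFinset v, x w = x v := by
    by_cases hv : IsPendant T v
    · refine hpar v hv ?_
      have hpos : 0 < T.dist m v := hT.connected.pos_dist_of_ne (hne v hv).symm
      rcases hpend v hv with rfl | rfl | rfl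
      · have : c v = 1 := if_neg fun h => k12 (branch_unique hT hn₁ hn₂ hb₁ h)
        rw [this]
        rw [dist_comm] at hd₁
        exact legSeq_one_eq_zero (by omega)
      · have : c v = 0 := if_pos hb₂
        rw [this]
        rw [dist_comm] at hd₂
        exact legSeq_zero_eq_zero (by omega)
      · have : c v = 1 := if_neg fun h => k23 (branch_unique hT hn₂ hn₃ h hb₃)
        rw [this]
        rw [dist_comm] at hd₃
        exact legSeq_one_eq_zero (by omega)
    by_cases hvm : v = m
    · subst hvm
      have e : ∀ n, T.Adj v n → x n = if n = n₂ then 0 else 1 := by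
        intro n hn
        have h1 : T.dist v n = 1 := dist_eq_one_iff_adj.2 hn
        simp only [x, c, h1, legSeq, Nat.add_eq_right, hT.connected.dist_eq_zero_iff,
          eq_comm (a := n₂)]
      rw [hN, hdm, Finset.sum_insert (by simp [k12, k13]), Finset.sum_insert (by simp [k23]),
        Finset.sum_singleton, e _ hn₁, e _ hn₂, e _ hn₃, hxm]
      simp [k12, k23.symm]
      norm_num
    · have hd : T.degree v = 2 := by
        have := hdeg v
        rw [if_neg hvm, if_neg (by rintro rfl; exact hv h₁), if_neg (by rintro rfl; exact hv h₂),
          if_neg (by rintro rfl; exact hv h₃)] at this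
        omega
      obtain ⟨p, hp, hpd⟩ := exists_parent hT (Ne.symm hvm)
      have hp' : p ∈ T.neighborFinset v := by simpa using hp
      obtain ⟨q, hq⟩ : ∃ q, (T.neighborFinset v).erase p = {q} :=
        Finset.card_eq_one.1 (by rw [Finset.card_erase_of_mem hp', card_neighborFinset_eq_degree, hd])
      have hq' : q ∈ (T.neighborFinset v).erase p := by simp [hq]
      rw [Finset.mem_erase, mem_neighborFinset] at hq'
      have hqd : T.dist m q = T.dist m v + 1 :=
        (hT.dist_eq_dist_add_one_of_adj m hq'.2).resolve_left fun h =>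
          hq'.1 (parent_unique hT hq'.2 hp h.symm hpd)
      rw [← Finset.add_sum_erase _ _ hp', hq, Finset.sum_singleton, hparent v p hp hpd,
        hchild v q hq'.2 hqd hvm, hd]
      obtain ⟨k, hk⟩ : ∃ k, T.dist m v = k + 1 := ⟨_, hpd.symm⟩
      simp only [x, hk, Nat.add_sub_cancel, legSeq]
      push_cast
      ring
  rw [one_smul, ← key, lapMat]
  convert lapMatrix_mulVec_apply T v x
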